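/- arXiv:2107.00504 — 11 statements merged into one kernel-verified Lean document; each statement's English description precedes it below -/
import Mathlib

section
/- Let δt > 0 and let (u^n), (ũ^n), (λ^n), (f^n) be sequences of functions from S to ℝ (f^n playing the role of the discrete operator L_h^n applied to ũ^{n+1}). Suppose that for every n ≥ 0 and every z ∈ S: (i) (ũ^{n+1}(z) − u^n(z))/δt + f^n(z) = 0; (ii) (u^{n+1}(z) − ũ^{n+1}(z))/δt = λ^{n+1}(z); (iii) λ^{n+1}(z) ≥ 0, u^{n+1}(z) ≥ 0, and λ^{n+1}(z)·u^{n+1}(z) = 0. Then for every m ≥ 1 the energy identity holds: ‖u^m‖² + ∑_{n=0}^{m−1} ( ‖ũ^{n+1} − u^n‖² + δt²‖λ^{n+1}‖² ) + 2δt ∑_{n=0}^{m−1} [f^n, ũ^{n+1}] = ‖u^0‖². -/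
open Finset

/-- Theorem 3.1 (energy identity) for the first-order operator-splitting
positivity-preserving scheme: `ut` is the predictor ũ, `lam` the Lagrange
multiplier λ, and `f n` plays the role of `L_h^n ũ^{n+1}`. -/
theorem first_order_energy_identity
    {S : Type*} [Fintype S] [Nonempty S] (w : S → ℝ) (hw : ∀ z, 0 < w z)
    (δt : ℝ) (hδt : 0 < δt)
    (u ut lam f : ℕ → S → ℝ)
    (hstep1 : ∀ n z, (ut (n + 1) z - u n z) / δt + f n z = 0)
    (hstep2 : ∀ n z, (u (n + 1) z - ut (n + 1) z) / δt = lam (n + 1) z)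
    (hKKT : ∀ n z, 0 ≤ lam (n + 1) z ∧ 0 ≤ u (n + 1) z ∧
      lam (n + 1) z * u (n + 1) z = 0)
    (m : ℕ) (hm : 1 ≤ m) :
    (∑ z, w z * u m z * u m z)
      + (∑ n ∈ Finset.range m,
          ((∑ z, w z * (ut (n + 1) z - u n z) * (ut (n + 1) z - u n z))
            + δt ^ 2 * ∑ z, w z * lam (n + 1) z * lam (n + 1) z))
      + 2 * δt * (∑ n ∈ Finset.range m, ∑ z, w z * f n z * ut (n + 1) z)
    = ∑ z, w z * u 0 z * u 0 z := by
  have hδ : δt ≠ 0 := hδt.ne'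
  have key : ∀ n, (∑ z, w z * u (n + 1) z * u (n + 1) z)
      + ((∑ z, w z * (ut (n + 1) z - u n z) * (ut (n + 1) z - u n z))
            + δt ^ 2 * ∑ z, w z * lam (n + 1) z * lam (n + 1) z)
      + 2 * δt * (∑ z, w z * f n z * ut (n + 1) z) = ∑ z, w z * u n z * u n z := by
    intro n
    simp only [Finset.mul_sum, ← Finset.sum_add_distrib]
    refine Finset.sum_congr rfl fun z _ => ?_
    have h1 : u n z = ut (n + 1) z + δt * f n z := by
      have h := hstep1 n z
      field_simp at h
      linarith
    have h2 : ut (n + 1) z = u (n + 1) z - δt * lam (n + 1) z := by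
      have h := hstep2 n z
      field_simp at h
      linarith
    have h3 := (hKKT n z).2.2
    rw [h1, h2]
    linear_combination (2 * w z * δt) * h3
  clear hm
  induction m with
  | zero => simp
  | succ k ih =>
    rw [Finset.sum_range_succ, Finset.sum_range_succ]
    linear_combination ih + key k
end

section
/- Let δt > 0 and let (u^n), (ũ^n), (λ^n), (f^n) be sequences of functions from S to ℝ satisfying, for every n ≥ 0 and z ∈ S: (ũ^{n+1}(z) − u^n(z))/δt + f^n(z) = 0; (u^{n+1}(z) − ũ^{n+1}(z))/δt = λ^{n+1}(z); λ^{n+1}(z) ≥ 0, u^{n+1}(z) ≥ 0, λ^{n+1}(z)·u^{n+1}(z) = 0. If in addition [f^n, ũ^{n+1}] ≥ 0 for every n ≥ 0, then the scheme is dissipative and unconditionally stable: ‖u^{n+1}‖ ≤ ‖u^n‖ for every n ≥ 0, and in particular ‖u^m‖ ≤ ‖u^0‖ for every m ≥ 1, with no restriction on δt. -/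
open Finset

/-- Stability clause of Theorem 3.1: if the discrete operator is nonnegative,
i.e. `[f^n, ũ^{n+1}] ≥ 0` for all `n`, then the first-order positivity-preserving
scheme is dissipative and unconditionally stable:
`‖u^{n+1}‖ ≤ ‖u^n‖` for all `n`, and `‖u^m‖ ≤ ‖u^0‖` for all `m ≥ 1`. -/
theorem first_order_unconditional_stability
    {S : Type*} [Fintype S] [Nonempty S] (w : S → ℝ) (hw : ∀ z, 0 < w z)
    (δt : ℝ) (hδt : 0 < δt)
    (u ut lam f : ℕ → S → ℝ)
    (hstep1 : ∀ n z, (ut (n + 1) z - u n z) / δt + f n z = 0)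
    (hstep2 : ∀ n z, (u (n + 1) z - ut (n + 1) z) / δt = lam (n + 1) z)
    (hKKT : ∀ n z, 0 ≤ lam (n + 1) z ∧ 0 ≤ u (n + 1) z ∧
      lam (n + 1) z * u (n + 1) z = 0)
    (hpos : ∀ n, 0 ≤ ∑ z, w z * f n z * ut (n + 1) z) :
    (∀ n, Real.sqrt (∑ z, w z * u (n + 1) z * u (n + 1) z)
        ≤ Real.sqrt (∑ z, w z * u n z * u n z)) ∧
    (∀ m, 1 ≤ m → Real.sqrt (∑ z, w z * u m z * u m z)
        ≤ Real.sqrt (∑ z, w z * u 0 z * u 0 z)) := by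
  have key : ∀ n, Real.sqrt (∑ z, w z * u (n + 1) z * u (n + 1) z)
        ≤ Real.sqrt (∑ z, w z * u n z * u n z) := by
    intro n
    apply Real.sqrt_le_sqrt
    have h : ∑ z, w z * u (n + 1) z * u (n + 1) z
        + 2 * δt * ∑ z, w z * f n z * ut (n + 1) z ≤ ∑ z, w z * u n z * u n z := by
      rw [Finset.mul_sum, ← Finset.sum_add_distrib]
      apply Finset.sum_le_sum
      intro z _
      have h1 := hstep1 n z
      have h2 := hstep2 n z
      obtain ⟨-, -, h3⟩ := hKKT n z
      have e1 : u n z = ut (n + 1) z + δt * f n z := by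
        field_simp at h1
        linarith
      have e2 : ut (n + 1) z = u (n + 1) z - δt * lam (n + 1) z := by
        rw [← h2]
        field_simp
        ring
      have e3 : w z * u n z * u n z
          = w z * u (n + 1) z * u (n + 1) z + 2 * δt * (w z * f n z * ut (n + 1) z)
            + w z * ((δt * lam (n + 1) z) ^ 2 + (δt * f n z) ^ 2) := by
        rw [e1, e2]
        linear_combination (-2 * w z * δt) * h3
      have e4 : 0 ≤ w z * ((δt * lam (n + 1) z) ^ 2 + (δt * f n z) ^ 2) :=
        mul_nonneg (hw z).le (by positivity)
      linarith
    have h' := mul_nonneg (mul_nonneg zero_le_two hδt.le) (hpos n)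
    linarith
  refine ⟨key, fun m _ => ?_⟩
  exact antitone_nat_of_succ_le
    (f := fun n => Real.sqrt (∑ z, w z * u n z * u n z)) key (Nat.zero_le m)
end

section
/- Let δt > 0, let (u^n), (ũ^n), (λ^n), (f^n) be sequences of functions from S to ℝ, and let (ξ^n) be a sequence of real scalars. Suppose that for every n ≥ 0 and z ∈ S: (i) (ũ^{n+1}(z) − u^n(z))/δt + f^n(z) = 0; (ii) (u^{n+1}(z) − ũ^{n+1}(z))/δt = λ^{n+1}(z) + ξ^{n+1}; (iii) λ^{n+1}(z) ≥ 0, u^{n+1}(z) ≥ 0, λ^{n+1}(z)·u^{n+1}(z) = 0; (iv) mass conservation [u^{n+1}, 1] = [u^n, 1]; and (v) [f^n, 1] = 0. Then for every m ≥ 1: ‖u^m‖² + ∑_{n=0}^{m−1} ( ‖ũ^{n+1} − u^n‖² + δt²‖λ^{n+1} + ξ^{n+1}‖² ) + 2δt ∑_{n=0}^{m−1} [f^n, ũ^{n+1}] ≤ ‖u^0‖². -/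
open Finset

/-- Theorem 3.2: stability of the first-order positivity-preserving scheme with
the additional scalar Lagrange multiplier `ξ^{n+1}` enforcing mass conservation.
Here `ut` is the predictor ũ, `lam` the pointwise multiplier λ, `ξ` the scalar
multiplier, and `f n` plays the role of `L_h^n ũ^{n+1}`, with
`[f^n, 1] = 0` encoding that the bilinear form annihilates constants. -/
theorem first_order_mass_conserving_stability
    {S : Type*} [Fintype S] [Nonempty S] (w : S → ℝ) (hw : ∀ z, 0 < w z)
    (δt : ℝ) (hδt : 0 < δt)
    (u ut lam f : ℕ → S → ℝ) (ξ : ℕ → ℝ)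
    (hstep1 : ∀ n z, (ut (n + 1) z - u n z) / δt + f n z = 0)
    (hstep2 : ∀ n z, (u (n + 1) z - ut (n + 1) z) / δt = lam (n + 1) z + ξ (n + 1))
    (hKKT : ∀ n z, 0 ≤ lam (n + 1) z ∧ 0 ≤ u (n + 1) z ∧
      lam (n + 1) z * u (n + 1) z = 0)
    (hmass : ∀ n, (∑ z, w z * u (n + 1) z * 1) = ∑ z, w z * u n z * 1)
    (hf1 : ∀ n, (∑ z, w z * f n z * 1) = 0)
    (m : ℕ) (hm : 1 ≤ m) :
    (∑ z, w z * u m z * u m z)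
      + (∑ n ∈ Finset.range m,
          ((∑ z, w z * (ut (n + 1) z - u n z) * (ut (n + 1) z - u n z))
            + δt ^ 2 * ∑ z, w z * (lam (n + 1) z + ξ (n + 1)) * (lam (n + 1) z + ξ (n + 1))))
      + 2 * δt * (∑ n ∈ Finset.range m, ∑ z, w z * f n z * ut (n + 1) z)
    ≤ ∑ z, w z * u 0 z * u 0 z := by
  have e1 : ∀ n z, ut (n + 1) z = u n z - δt * f n z := by
    intro n z
    have h := hstep1 n z
    field_simp at h
    linarith
  have e2 : ∀ n z, u (n + 1) z = ut (n + 1) z + δt * (lam (n + 1) z + ξ (n + 1)) := by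
    intro n z
    have h := hstep2 n z
    rw [div_eq_iff hδt.ne'] at h
    linarith
  have hW : 0 < ∑ z, w z := Finset.sum_pos (fun z _ => hw z) Finset.univ_nonempty
  have hξ : ∀ n, ξ (n + 1) ≤ 0 := by
    intro n
    have h1 : (∑ z, w z * u (n + 1) z * 1) = (∑ z, w z * u n z * 1)
        - δt * (∑ z, w z * f n z * 1)
        + δt * ((∑ z, w z * lam (n + 1) z) + ξ (n + 1) * ∑ z, w z) := by
      simp only [Finset.mul_sum, ← Finset.sum_add_distrib, ← Finset.sum_sub_distrib]
      refine Finset.sum_congr rfl fun z _ => ?_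
      rw [e2, e1]
      ring
    rw [hmass, hf1] at h1
    have h2 : δt * ((∑ z, w z * lam (n + 1) z) + ξ (n + 1) * ∑ z, w z) = 0 := by linarith
    have h3 := (mul_eq_zero.mp h2).resolve_left hδt.ne'
    have h4 : 0 ≤ ∑ z, w z * lam (n + 1) z :=
      Finset.sum_nonneg fun z _ => mul_nonneg (hw z).le (hKKT n z).1
    by_contra hc
    have := mul_pos (not_le.mp hc) hW
    linarith
  have step : ∀ n, (∑ z, w z * u (n + 1) z * u (n + 1) z)
      + ((∑ z, w z * (ut (n + 1) z - u n z) * (ut (n + 1) z - u n z))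
        + δt ^ 2 * ∑ z, w z * (lam (n + 1) z + ξ (n + 1)) * (lam (n + 1) z + ξ (n + 1)))
      + 2 * δt * (∑ z, w z * f n z * ut (n + 1) z)
      ≤ ∑ z, w z * u n z * u n z := by
    intro n
    have h1 : (∑ z, w z * u (n + 1) z * u (n + 1) z)
      + ((∑ z, w z * (ut (n + 1) z - u n z) * (ut (n + 1) z - u n z))
        + δt ^ 2 * ∑ z, w z * (lam (n + 1) z + ξ (n + 1)) * (lam (n + 1) z + ξ (n + 1)))
      + 2 * δt * (∑ z, w z * f n z * ut (n + 1) z)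
      = (∑ z, w z * u n z * u n z) + 2 * δt * ξ (n + 1) * ∑ z, w z * u (n + 1) z := by
      simp only [Finset.mul_sum, ← Finset.sum_add_distrib]
      refine Finset.sum_congr rfl fun z _ => ?_
      have hk := (hKKT n z).2.2
      have h2 := e2 n z
      have h1 := e1 n z
      have h3 : u n z = ut (n + 1) z + δt * f n z := by linarith
      have h4 : ut (n + 1) z = u (n + 1) z - δt * (lam (n + 1) z + ξ (n + 1)) := by linarith
      rw [h3, h4]
      linear_combination (2 * δt * w z) * hk
    have h2 : 0 ≤ ∑ z, w z * u (n + 1) z :=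
      Finset.sum_nonneg fun z _ => mul_nonneg (hw z).le (hKKT n z).2.1
    have h3 : 2 * δt * ξ (n + 1) * ∑ z, w z * u (n + 1) z ≤ 0 :=
      mul_nonpos_of_nonpos_of_nonneg
        (mul_nonpos_of_nonneg_of_nonpos (by positivity) (hξ n)) h2
    linarith
  clear hm
  induction m with
  | zero => simp
  | succ k ih =>
    rw [Finset.sum_range_succ, Finset.sum_range_succ, mul_add]
    have := step k
    linarith
end

section
/- Let δt > 0 and let (u^n), (ũ^n), (λ^n), (f^n) be sequences of functions from S to ℝ satisfying the first-order scheme at the first step (ũ^1(z) − u^0(z) + δt·f^0(z) = 0; u^1(z) − ũ^1(z) = δt·λ^1(z); λ^1(z) ≥ 0, u^1(z) ≥ 0, λ^1(z)·u^1(z) = 0 for all z ∈ S) and the second-order scheme for n ≥ 1 ((3ũ^{n+1}(z) − 4u^n(z) + u^{n−1}(z))/(2δt) + f^n(z) = λ^n(z); 3(u^{n+1}(z) − ũ^{n+1}(z))/(2δt) = λ^{n+1}(z) − λ^n(z); λ^{n+1}(z) ≥ 0, u^{n+1}(z) ≥ 0, λ^{n+1}(z)·u^{n+1}(z) = 0 for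 all z ∈ S). If [f^n, ũ^{n+1}] ≥ 0 for all n ≥ 0, then the scheme is unconditionally stable: for every m ≥ 1, 4‖u^m‖² + (4/3)δt²‖λ^m‖² ≤ ‖2u^1 − u^0‖² + 4‖u^0‖². -/
open Finset

lemma aux_key {S : Type*} [Fintype S] (w : S → ℝ) (hw : ∀ z, 0 < w z)
    (F G P : S → ℝ) (c : ℝ) (hc : 0 ≤ c) (hpos : 0 ≤ ∑ z, w z * F z * G z)
    (h : ∀ z, c * (F z * G z) ≤ P z) : 0 ≤ ∑ z, w z * P z := by
  have h1 : c * ∑ z, w z * F z * G z ≤ ∑ z, w z * P z := by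
    rw [Finset.mul_sum]
    apply Finset.sum_le_sum
    intro z _
    have := mul_le_mul_of_nonneg_left (h z) (hw z).le
    linarith
  have := mul_nonneg hc hpos
  linarith

lemma aux_step (k a b c ua l m f : ℝ) (hk : 0 < k)
    (h1 : (3 * ua - 4 * b + c) / (2 * k) + f = m)
    (h2 : 3 * (a - ua) / (2 * k) = l - m)
    (ha : 0 ≤ a) (hb : 0 ≤ b) (hl : 0 ≤ l) (hm : 0 ≤ m) (hla : l * a = 0) (hmb : m * b = 0) :
    4 * k * (f * ua) ≤ (b ^ 2 + (2 * b - c) ^ 2 + 4 / 3 * k ^ 2 * m ^ 2)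
      - (a ^ 2 + (2 * a - b) ^ 2 + 4 / 3 * k ^ 2 * l ^ 2) := by
  have e2 : ua = a - 2 / 3 * (k * l - k * m) := by
    field_simp at h2
    linarith
  have e1 : 2 * k * f = 2 * (k * m) - (3 * ua - 4 * b + c) := by
    field_simp at h1
    linarith
  have e3 : 4 * k * (f * ua) = 2 * ua * (2 * k * f) := by ring
  rw [e3, e1, e2]
  have p1 : 0 ≤ k * (m * a) := by positivity
  have p2 : 0 ≤ k * (l * b) := by positivity
  have q1 : k * (l * a) = 0 := by rw [hla]; ring
  have q2 : k * (m * b) = 0 := by rw [hmb]; ring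
  have s1 := sq_nonneg ((a - 2 * b + c) - 2 / 3 * (k * l - k * m))
  have s2 := sq_nonneg (k * l - k * m)
  nlinarith

lemma aux_first (k a c ua l f : ℝ)
    (h1 : ua - c + k * f = 0) (h2 : a - ua = k * l) (hla : l * a = 0) :
    8 * k * (f * ua) ≤ (2 * a - c) ^ 2 + 4 * c ^ 2
        - 2 * (a ^ 2 + (2 * a - c) ^ 2 + 4 / 3 * k ^ 2 * l ^ 2) ∧
    4 * k * (f * ua) ≤ 3 / 4 * ((2 * a - c) ^ 2 + 4 * c ^ 2)
        - (a ^ 2 + (2 * a - c) ^ 2 + 4 / 3 * k ^ 2 * l ^ 2) - a ^ 2 ∧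
    8 * k * (f * ua) ≤ (2 * a - c) ^ 2 + 4 * c ^ 2
        - (4 * a ^ 2 + 4 / 3 * k ^ 2 * l ^ 2) := by
  have e1 : k * f = c - ua := by linarith
  have e2 : ua = a - k * l := by linarith
  have e3 : 8 * k * (f * ua) = 8 * (k * f) * ua := by ring
  have e4 : 4 * k * (f * ua) = 4 * (k * f) * ua := by ring
  rw [e3, e4, e1, e2]
  rcases mul_eq_zero.1 hla with h | h
  · subst h
    refine ⟨?_, ?_, ?_⟩
    · nlinarith [sq_nonneg (a - c), sq_nonneg a, sq_nonneg c]
    · nlinarith [sq_nonneg (a - c), sq_nonneg a, sq_nonneg c]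
    · nlinarith [sq_nonneg (a - c), sq_nonneg a, sq_nonneg c]
  · subst h
    refine ⟨?_, ?_, ?_⟩
    · nlinarith [sq_nonneg (4 * (k * l) + 3 * c), sq_nonneg c, sq_nonneg (k * l)]
    · nlinarith [sq_nonneg (2 * (k * l) + c), sq_nonneg (k * l + c), sq_nonneg c, sq_nonneg (k * l)]
    · nlinarith [sq_nonneg (2 * (k * l) + c), sq_nonneg (k * l + c), sq_nonneg c, sq_nonneg (k * l)]

/-- Unconditional-stability clause of Theorem 3.3 for the second-order BDF2
positivity-preserving scheme: if `[f^n, ũ^{n+1}] ≥ 0` for all `n` (positivity of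
the discrete operator) then `4‖u^m‖² + (4/3)δt²‖λ^m‖² ≤ ‖2u^1 − u^0‖² + 4‖u^0‖²`
for every `m ≥ 1`, with no restriction on the time step. -/
theorem second_order_unconditional_stability
    {S : Type*} [Fintype S] [Nonempty S] (w : S → ℝ) (hw : ∀ z, 0 < w z)
    (δt : ℝ) (hδt : 0 < δt)
    (u ut lam f : ℕ → S → ℝ)
    (hfirst1 : ∀ z, ut 1 z - u 0 z + δt * f 0 z = 0)
    (hfirst2 : ∀ z, u 1 z - ut 1 z = δt * lam 1 z)
    (hfirstKKT : ∀ z, 0 ≤ lam 1 z ∧ 0 ≤ u 1 z ∧ lam 1 z * u 1 z = 0)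
    (hstep1 : ∀ n, 1 ≤ n → ∀ z,
      (3 * ut (n + 1) z - 4 * u n z + u (n - 1) z) / (2 * δt) + f n z = lam n z)
    (hstep2 : ∀ n, 1 ≤ n → ∀ z,
      3 * (u (n + 1) z - ut (n + 1) z) / (2 * δt) = lam (n + 1) z - lam n z)
    (hKKT : ∀ n, 1 ≤ n → ∀ z, 0 ≤ lam (n + 1) z ∧ 0 ≤ u (n + 1) z ∧
      lam (n + 1) z * u (n + 1) z = 0)
    (hpos : ∀ n, 0 ≤ ∑ z, w z * f n z * ut (n + 1) z)
    (m : ℕ) (hm : 1 ≤ m) :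
    4 * (∑ z, w z * u m z * u m z)
      + (4 / 3) * δt ^ 2 * (∑ z, w z * lam m z * lam m z)
    ≤ (∑ z, w z * (2 * u 1 z - u 0 z) * (2 * u 1 z - u 0 z))
      + 4 * (∑ z, w z * u 0 z * u 0 z) := by
  have K : ∀ n, 1 ≤ n → ∀ z, 0 ≤ lam n z ∧ 0 ≤ u n z ∧ lam n z * u n z = 0 := by
    intro n hn
    obtain rfl | h := eq_or_lt_of_le hn
    · exact hfirstKKT
    · obtain ⟨j, rfl⟩ : ∃ j, n = j + 1 := ⟨n - 1, by omega⟩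
      exact hKKT j (by omega)
  set R : ℝ := ∑ z, w z * ((2 * u 1 z - u 0 z) ^ 2 + 4 * u 0 z ^ 2) with hR
  let a : ℕ → ℝ := fun n => ∑ z, w z * u n z ^ 2
  let L : ℕ → ℝ := fun n => ∑ z, w z * (4 / 3 * δt ^ 2 * lam n z ^ 2)
  let B : ℕ → ℝ := fun n => ∑ z, w z * (2 * u (n + 1) z - u n z) ^ 2
  have hL : ∀ n, 0 ≤ L n := fun n => Finset.sum_nonneg fun z _ =>
    mul_nonneg (hw z).le (by positivity)
  have F := fun z => aux_first δt (u 1 z) (u 0 z) (ut 1 z) (lam 1 z) (f 0 z)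
    (hfirst1 z) (hfirst2 z) (hfirstKKT z).2.2
  have F1 := aux_key w hw (f 0) (ut 1) _ (8 * δt) (by positivity) (hpos 0) (fun z => (F z).1)
  have F2 := aux_key w hw (f 0) (ut 1) _ (4 * δt) (by positivity) (hpos 0) (fun z => (F z).2.1)
  have F3 := aux_key w hw (f 0) (ut 1) _ (8 * δt) (by positivity) (hpos 0) (fun z => (F z).2.2)
  have G1 : 2 * (a 1 + B 0 + L 1) ≤ R := by
    rw [← sub_nonneg]
    convert F1 using 1
    simp only [hR, a, B, L, ← Finset.sum_add_distrib, Finset.mul_sum, ← Finset.sum_sub_distrib]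
    exact Finset.sum_congr rfl fun z _ => by ring
  have G2 : (a 1 + B 0 + L 1) + a 1 ≤ 3 / 4 * R := by
    rw [← sub_nonneg]
    convert F2 using 1
    simp only [hR, a, B, L, ← Finset.sum_add_distrib, Finset.mul_sum, ← Finset.sum_sub_distrib]
    exact Finset.sum_congr rfl fun z _ => by ring
  have G3 : 4 * a 1 + L 1 ≤ R := by
    rw [← sub_nonneg]
    convert F3 using 1
    simp only [hR, a, L, ← Finset.sum_add_distrib, Finset.mul_sum, ← Finset.sum_sub_distrib]
    exact Finset.sum_congr rfl fun z _ => by ring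
  have D : ∀ n, a (n + 2) + B (n + 1) + L (n + 2) ≤ a (n + 1) + B n + L (n + 1) := by
    intro n
    have := aux_key w hw (f (n + 1)) (ut (n + 2)) _ (4 * δt) (by positivity) (hpos (n + 1))
      (fun z => aux_step δt (u (n + 2) z) (u (n + 1) z) (u n z) (ut (n + 2) z) (lam (n + 2) z)
        (lam (n + 1) z) (f (n + 1) z) hδt (hstep1 (n + 1) (by omega) z)
        (hstep2 (n + 1) (by omega) z) (K (n + 2) (by omega) z).2.1 (K (n + 1) (by omega) z).2.1
        (K (n + 2) (by omega) z).1 (K (n + 1) (by omega) z).1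
        (K (n + 2) (by omega) z).2.2 (K (n + 1) (by omega) z).2.2)
    rw [← sub_nonneg]
    convert this using 1
    simp only [a, B, L, ← Finset.sum_add_distrib, ← Finset.sum_sub_distrib]
    exact Finset.sum_congr rfl fun z _ => by ring
  have E : ∀ n, a (n + 1) + B n + L (n + 1) ≤ a 1 + B 0 + L 1 := by
    intro n
    induction n with
    | zero => exact le_rfl
    | succ n ih => exact (D n).trans ih
  have hB : ∀ n, 2 * a (n + 1) - a n ≤ B n := by
    intro n
    simp only [a, B, Finset.mul_sum, ← Finset.sum_sub_distrib]
    refine Finset.sum_le_sum fun z _ => ?_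
    nlinarith [mul_nonneg (hw z).le (sq_nonneg (u (n + 1) z - u n z))]
  have A : ∀ n, a (n + 1) ≤ 3 / 4 * R - (a 1 + B 0 + L 1) := by
    intro n
    induction n with
    | zero => simp only [Nat.zero_add]; linarith
    | succ n ih => linarith [E (n + 1), hB (n + 1), hL (n + 1 + 1)]
  have key : ∀ n, 4 * a (n + 1) + L (n + 1) ≤ R := by
    intro n
    cases n with
    | zero => exact G3
    | succ n => linarith [E (n + 1), hB (n + 1), hL (n + 1 + 1), A n]
  obtain ⟨n, rfl⟩ : ∃ n, m = n + 1 := ⟨m - 1, by omega⟩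
  convert key n using 1
  · simp only [a, L, Finset.mul_sum]
    congr 1 <;> exact Finset.sum_congr rfl fun z _ => by ring
  · simp only [hR, Finset.mul_sum, ← Finset.sum_add_distrib]
    exact Finset.sum_congr rfl fun z _ => by ring
end

section
/- Let δt > 0 and let u, ũ, λ, f : S → ℝ be such that for every z ∈ S: (ũ(z) − u(z))/δt + f(z) = 0 (prediction), (u'(z) − ũ(z))/δt = λ(z) (correction) for some u' : S → ℝ with λ(z) ≥ 0, and suppose [f, 1] = 0. Then [u', 1] = [u, 1] + δt·[λ, 1], and since λ ≥ 0 pointwise and the weights are positive, [u', 1] ≥ [u, 1]. In particular, the first-order positivity-preserving scheme without the scalar multiplier does not conserve mass: the discrete mass [u^n, 1] is nondecreasing in n. -/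
open Finset

/-- The first-order positivity-preserving scheme without the scalar multiplier
does not conserve mass: with `u` the solution at level `n`, `ut = ũ` the
predictor, `u'` the corrected solution at level `n+1`, `lam ≥ 0` the Lagrange
multiplier and `[f, 1] = 0`, one has `[u', 1] = [u, 1] + δt·[λ, 1]` and hence
`[u', 1] ≥ [u, 1]`: the discrete mass is nondecreasing. -/
theorem scheme_without_mass_correction_increases_mass
    {S : Type*} [Fintype S] [Nonempty S] (w : S → ℝ) (hw : ∀ z, 0 < w z)
    (δt : ℝ) (hδt : 0 < δt)
    (u ut u' lam f : S → ℝ)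
    (hstep1 : ∀ z, (ut z - u z) / δt + f z = 0)
    (hstep2 : ∀ z, (u' z - ut z) / δt = lam z)
    (hlam : ∀ z, 0 ≤ lam z)
    (hf1 : (∑ z, w z * f z * 1) = 0) :
    (∑ z, w z * u' z * 1) = (∑ z, w z * u z * 1) + δt * (∑ z, w z * lam z * 1) ∧
    (∑ z, w z * u z * 1) ≤ ∑ z, w z * u' z * 1 := by
  have key : (∑ z, w z * u' z * 1)
      = (∑ z, w z * u z * 1) + δt * (∑ z, w z * lam z * 1) := by
    have h : ∀ z, w z * u' z * 1
        = w z * u z * 1 + δt * (w z * lam z * 1) - δt * (w z * f z * 1) := by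
      intro z
      have h1 : ut z - u z = -(f z) * δt := by
        rw [← div_eq_iff hδt.ne']
        linarith [hstep1 z]
      have h2 : u' z - ut z = lam z * δt := by
        rw [← div_eq_iff hδt.ne']
        exact hstep2 z
      have h3 : u' z = u z + δt * lam z - δt * f z := by linarith
      rw [h3]
      ring
    rw [Finset.sum_congr rfl (fun z _ => h z), Finset.sum_sub_distrib,
      Finset.sum_add_distrib, ← Finset.mul_sum, ← Finset.mul_sum, hf1]
    ring
  refine ⟨key, ?_⟩
  have hnn : 0 ≤ ∑ z, w z * lam z * 1 :=
    Finset.sum_nonneg (fun z _ => by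
      rw [mul_one]
      exact mul_nonneg (hw z).le (hlam z))
  rw [key]
  linarith [mul_nonneg hδt.le hnn]
end

section
/- Let δt > 0 and ξ ∈ ℝ, and let u, ũ, v, λ, f : S → ℝ satisfy for every z ∈ S: (ũ(z) − v(z))/δt + f(z) = 0 and (u(z) − ũ(z))/δt = λ(z) + ξ, with λ(z) ≥ 0 for all z. If [f, 1] = 0 and [u, 1] = [v, 1], then [λ, 1] + ξ·[1, 1] = 0, hence ξ = −[λ, 1]/[1, 1] ≤ 0. -/
open Finset

/-- Sign property of the scalar mass multiplier (proof of Theorem 3.2): with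
`v` the solution at level `n`, `ut = ũ` the predictor, `u` the corrected
solution, `lam ≥ 0` the pointwise multiplier and `ξ` the scalar multiplier, if
`[f, 1] = 0` and `[u, 1] = [v, 1]` then `[λ, 1] + ξ·[1, 1] = 0`, hence
`ξ = −[λ, 1]/[1, 1] ≤ 0`. -/
theorem scalar_mass_multiplier_nonpositive
    {S : Type*} [Fintype S] [Nonempty S] (w : S → ℝ) (hw : ∀ z, 0 < w z)
    (δt : ℝ) (hδt : 0 < δt) (ξ : ℝ)
    (u ut v lam f : S → ℝ)
    (hstep1 : ∀ z, (ut z - v z) / δt + f z = 0)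
    (hstep2 : ∀ z, (u z - ut z) / δt = lam z + ξ)
    (hlam : ∀ z, 0 ≤ lam z)
    (hf1 : (∑ z, w z * f z * 1) = 0)
    (hmass : (∑ z, w z * u z * 1) = ∑ z, w z * v z * 1) :
    (∑ z, w z * lam z * 1) + ξ * (∑ z, w z * (1 : ℝ) * 1) = 0 ∧
    ξ = -(∑ z, w z * lam z * 1) / (∑ z, w z * (1 : ℝ) * 1) ∧
    ξ ≤ 0 := by
  have hpos : 0 < ∑ z, w z * (1 : ℝ) * 1 :=
    Finset.sum_pos (fun z _ => by simpa using hw z) Finset.univ_nonempty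
  have hL : 0 ≤ ∑ z, w z * lam z * 1 :=
    Finset.sum_nonneg (fun z _ => by
      have := mul_nonneg (hw z).le (hlam z)
      simpa using this)
  have key : (∑ z, w z * lam z * 1) + ξ * (∑ z, w z * (1 : ℝ) * 1)
      = ((∑ z, w z * u z * 1) - ∑ z, w z * v z * 1) / δt + ∑ z, w z * f z * 1 := by
    rw [← Finset.sum_sub_distrib, Finset.sum_div, Finset.mul_sum,
      ← Finset.sum_add_distrib, ← Finset.sum_add_distrib]
    refine Finset.sum_congr rfl (fun z _ => ?_)
    have h1 := hstep1 z
    have h2 := hstep2 z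
    linear_combination (-w z) * h2 - w z * h1
  have h0 : (∑ z, w z * lam z * 1) + ξ * (∑ z, w z * (1 : ℝ) * 1) = 0 := by
    rw [key, hmass, hf1]
    simp
  have h1 : ξ = -(∑ z, w z * lam z * 1) / (∑ z, w z * (1 : ℝ) * 1) := by
    rw [eq_div_iff hpos.ne']
    linarith
  refine ⟨h0, h1, ?_⟩
  rw [h1]
  exact div_nonpos_of_nonpos_of_nonneg (by linarith) hpos.le
end

section
/- Let δt > 0 and ξ ∈ ℝ, and let u, ũ, λ : S → ℝ be such that for every z ∈ S one has u(z) − δt·(λ(z) + ξ) = ũ(z) and λ(z)·u(z) = 0. Then ‖u‖² + δt²‖λ + ξ‖² − 2δt·ξ·[u, 1] = ‖ũ‖², where ‖λ + ξ‖ is the norm of the function z ↦ λ(z) + ξ. Consequently, if moreover ξ ≤ 0 and u(z) ≥ 0 for all z, then ‖u‖² + δt²‖λ + ξ‖² ≤ ‖ũ‖². -/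
open Finset

/-- Single-step identity (and resulting inequality) in the proof of Theorem 3.2
for the mass-conserving first-order positivity-preserving scheme: if
`u − δt·(λ + ξ) = ũ` pointwise and `λ·u = 0`, then
`‖u‖² + δt²‖λ + ξ‖² − 2δt·ξ·[u, 1] = ‖ũ‖²`; consequently, if `ξ ≤ 0` and
`u ≥ 0` pointwise, then `‖u‖² + δt²‖λ + ξ‖² ≤ ‖ũ‖²`. -/
theorem mass_correction_step_identity
    {S : Type*} [Fintype S] [Nonempty S] (w : S → ℝ) (hw : ∀ z, 0 < w z)
    (δt : ℝ) (hδt : 0 < δt) (ξ : ℝ)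
    (u ut lam : S → ℝ)
    (hstep : ∀ z, u z - δt * (lam z + ξ) = ut z)
    (hcomp : ∀ z, lam z * u z = 0) :
    ((∑ z, w z * u z * u z)
        + δt ^ 2 * (∑ z, w z * (lam z + ξ) * (lam z + ξ))
        - 2 * δt * ξ * (∑ z, w z * u z * 1)
      = ∑ z, w z * ut z * ut z) ∧
    (ξ ≤ 0 → (∀ z, 0 ≤ u z) →
      (∑ z, w z * u z * u z)
          + δt ^ 2 * (∑ z, w z * (lam z + ξ) * (lam z + ξ))
        ≤ ∑ z, w z * ut z * ut z) := by
  have key : (∑ z, w z * u z * u z)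
        + δt ^ 2 * (∑ z, w z * (lam z + ξ) * (lam z + ξ))
        - 2 * δt * ξ * (∑ z, w z * u z * 1)
      = ∑ z, w z * ut z * ut z := by
    rw [Finset.mul_sum, Finset.mul_sum, ← Finset.sum_add_distrib, ← Finset.sum_sub_distrib]
    refine Finset.sum_congr rfl fun z _ => ?_
    rw [← hstep z]
    linear_combination (2 * δt * w z) * hcomp z
  refine ⟨key, fun hξ hu => ?_⟩
  have h1 : 0 ≤ ∑ z, w z * u z * 1 :=
    Finset.sum_nonneg fun z _ => by
      have := mul_nonneg (hw z).le (hu z)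
      linarith
  have h2 : 2 * δt * ξ * (∑ z, w z * u z * 1) ≤ 0 :=
    mul_nonpos_of_nonpos_of_nonneg (mul_nonpos_of_nonneg_of_nonpos (by linarith) hξ) h1
  linarith
end

section
/- Let δt > 0 and let u, u', ũ, λ, λ' : S → ℝ satisfy, for every z ∈ S: u'(z) − ũ(z) = (2δt/3)(λ'(z) − λ(z)); u(z) ≥ 0, u'(z) ≥ 0, λ(z) ≥ 0, λ'(z) ≥ 0; u(z)·λ(z) = 0 and u'(z)·λ'(z) = 0. Then 4[u' − u, ũ − u'] = (8δt/3)([u', λ] + [u, λ']) ≥ 0. -/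
open Finset

/-- Cross-term positivity estimate (equation (3.16)) used in the proof of
Theorem 3.3: with `u, lam` the corrected solution and multiplier at level `n`,
`u', lam'` those at level `n+1`, and `ut = ũ` the BDF2 predictor satisfying
`u' − ũ = (2δt/3)(λ' − λ)`, the KKT conditions at the two consecutive levels
yield `4[u' − u, ũ − u'] = (8δt/3)([u', λ] + [u, λ']) ≥ 0`. -/
theorem bdf2_cross_term_nonneg
    {S : Type*} [Fintype S] [Nonempty S] (w : S → ℝ) (hw : ∀ z, 0 < w z)
    (δt : ℝ) (hδt : 0 < δt)
    (u u' ut lam lam' : S → ℝ)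
    (hstep : ∀ z, u' z - ut z = (2 * δt / 3) * (lam' z - lam z))
    (hu : ∀ z, 0 ≤ u z) (hu' : ∀ z, 0 ≤ u' z)
    (hlam : ∀ z, 0 ≤ lam z) (hlam' : ∀ z, 0 ≤ lam' z)
    (hcomp : ∀ z, u z * lam z = 0) (hcomp' : ∀ z, u' z * lam' z = 0) :
    4 * (∑ z, w z * (u' z - u z) * (ut z - u' z))
      = (8 * δt / 3) * ((∑ z, w z * u' z * lam z) + (∑ z, w z * u z * lam' z)) ∧
    0 ≤ 4 * (∑ z, w z * (u' z - u z) * (ut z - u' z)) := by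
  have key : 4 * (∑ z, w z * (u' z - u z) * (ut z - u' z))
      = (8 * δt / 3) * ((∑ z, w z * u' z * lam z) + (∑ z, w z * u z * lam' z)) := by
    rw [← Finset.sum_add_distrib, Finset.mul_sum, Finset.mul_sum]
    refine Finset.sum_congr rfl fun z _ => ?_
    linear_combination (-4 * w z * (u' z - u z)) * hstep z
      - (8 * δt / 3) * w z * hcomp z - (8 * δt / 3) * w z * hcomp' z
  refine ⟨key, ?_⟩
  rw [key]
  have h1 : 0 ≤ ∑ z, w z * u' z * lam z :=
    Finset.sum_nonneg fun z _ => mul_nonneg (mul_nonneg (hw z).le (hu' z)) (hlam z)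
  have h2 : 0 ≤ ∑ z, w z * u z * lam' z :=
    Finset.sum_nonneg fun z _ => mul_nonneg (mul_nonneg (hw z).le (hu z)) (hlam' z)
  exact mul_nonneg (by positivity) (add_nonneg h1 h2)
end

section
/- Let δt > 0 and let u, ũ, λ, μ : S → ℝ be such that for every z ∈ S one has 3u(z) − 2δt·λ(z) = 3ũ(z) − 2δt·μ(z), together with the complementarity condition λ(z)·u(z) = 0 for all z. Then 3‖u‖² + (4/3)δt²‖λ‖² = 3‖ũ‖² − 4δt·[ũ, μ] + (4/3)δt²‖μ‖². -/
open Finset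

/-- Identity (3.19) in the proof of Theorem 3.3: the rewritten correction step
`3u − 2δt·λ = 3ũ − 2δt·μ` of the second-order scheme, combined with the
complementarity `λ·u = 0`, gives
`3‖u‖² + (4/3)δt²‖λ‖² = 3‖ũ‖² − 4δt·[ũ, μ] + (4/3)δt²‖μ‖²`. -/
theorem bdf2_correction_step_identity
    {S : Type*} [Fintype S] [Nonempty S] (w : S → ℝ) (hw : ∀ z, 0 < w z)
    (δt : ℝ) (hδt : 0 < δt)
    (u ut lam μ : S → ℝ)
    (hstep : ∀ z, 3 * u z - 2 * δt * lam z = 3 * ut z - 2 * δt * μ z)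
    (hcomp : ∀ z, lam z * u z = 0) :
    3 * (∑ z, w z * u z * u z) + (4 / 3) * δt ^ 2 * (∑ z, w z * lam z * lam z)
      = 3 * (∑ z, w z * ut z * ut z) - 4 * δt * (∑ z, w z * ut z * μ z)
        + (4 / 3) * δt ^ 2 * (∑ z, w z * μ z * μ z) := by
  simp only [Finset.mul_sum]
  rw [← Finset.sum_add_distrib, ← Finset.sum_sub_distrib, ← Finset.sum_add_distrib]
  refine Finset.sum_congr rfl fun z _ => ?_
  linear_combination (w z / 3) * ((3 * u z - 2 * δt * lam z) + (3 * ut z - 2 * δt * μ z)) * hstep z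
    + 4 * δt * w z * hcomp z
end

section
/- Let δt > 0 and ξ, ξ' ∈ ℝ, and let u, u', ũ, λ, λ' : S → ℝ satisfy, for every z ∈ S: u'(z) − ũ(z) = (2δt/3)(λ'(z) + ξ' − λ(z) − ξ); u(z) ≥ 0, u'(z) ≥ 0, λ(z) ≥ 0, λ'(z) ≥ 0; u(z)·λ(z) = 0 and u'(z)·λ'(z) = 0. If additionally [u', 1] = [u, 1], then 4[u' − u, ũ − u'] = (8δt/3)([u', λ] + [u, λ']) ≥ 0. -/
open Finset

/-- Cross-term positivity estimate (equation (3.28)) in the proof of Theorem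
3.4: with `u, lam, ξ` the corrected solution, pointwise multiplier and scalar
mass multiplier at level `n`, and `u', lam', ξ'` those at level `n+1`, with
`ut = ũ` the BDF2 predictor, if `u' − ũ = (2δt/3)(λ' + ξ' − λ − ξ)` pointwise,
the KKT conditions hold at both levels and the discrete mass is conserved
(`[u', 1] = [u, 1]`), then
`4[u' − u, ũ − u'] = (8δt/3)([u', λ] + [u, λ']) ≥ 0`. -/
theorem bdf2_mass_cross_term_nonneg
    {S : Type*} [Fintype S] [Nonempty S] (w : S → ℝ) (hw : ∀ z, 0 < w z)
    (δt : ℝ) (hδt : 0 < δt) (ξ ξ' : ℝ)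
    (u u' ut lam lam' : S → ℝ)
    (hstep : ∀ z, u' z - ut z = (2 * δt / 3) * (lam' z + ξ' - lam z - ξ))
    (hu : ∀ z, 0 ≤ u z) (hu' : ∀ z, 0 ≤ u' z)
    (hlam : ∀ z, 0 ≤ lam z) (hlam' : ∀ z, 0 ≤ lam' z)
    (hcomp : ∀ z, u z * lam z = 0) (hcomp' : ∀ z, u' z * lam' z = 0)
    (hmass : (∑ z, w z * u' z * 1) = ∑ z, w z * u z * 1) :
    4 * (∑ z, w z * (u' z - u z) * (ut z - u' z))
      = (8 * δt / 3) * ((∑ z, w z * u' z * lam z) + (∑ z, w z * u z * lam' z)) ∧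
    0 ≤ 4 * (∑ z, w z * (u' z - u z) * (ut z - u' z)) := by
  have key : (∑ z, w z * (u' z - u z) * (ut z - u' z))
      = (2 * δt / 3) * ((∑ z, w z * u' z * lam z) + (∑ z, w z * u z * lam' z))
        + (2 * δt / 3) * (ξ - ξ') * ((∑ z, w z * u' z * 1) - ∑ z, w z * u z * 1) := by
    rw [← Finset.sum_add_distrib, ← Finset.sum_sub_distrib, Finset.mul_sum, Finset.mul_sum,
      ← Finset.sum_add_distrib]
    refine Finset.sum_congr rfl fun z _ => ?_
    linear_combination (-(w z * (u' z - u z))) * hstep z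
      - (2 * δt / 3) * w z * (hcomp z + hcomp' z)
  have h1 : 4 * (∑ z, w z * (u' z - u z) * (ut z - u' z))
      = (8 * δt / 3) * ((∑ z, w z * u' z * lam z) + (∑ z, w z * u z * lam' z)) := by
    rw [key, hmass]
    ring
  refine ⟨h1, ?_⟩
  rw [h1]
  have h2 : 0 ≤ ∑ z, w z * u' z * lam z :=
    Finset.sum_nonneg fun z _ => mul_nonneg (mul_nonneg (hw z).le (hu' z)) (hlam z)
  have h3 : 0 ≤ ∑ z, w z * u z * lam' z :=
    Finset.sum_nonneg fun z _ => mul_nonneg (mul_nonneg (hw z).le (hu z)) (hlam' z)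
  positivity
end

section
/- Let δt > 0 and ξ ∈ ℝ, and let u⁻, v, u, ũ, λ, f : S → ℝ satisfy, for every z ∈ S: (3u(z) − 4v(z) + u⁻(z))/(2δt) + f(z) = λ(z) + ξ, with λ(z) ≥ 0, u(z) ≥ 0 and λ(z)·u(z) = 0 for all z. If [f, 1] = 0 and [u, 1] = [v, 1] = [u⁻, 1], then [λ, 1] + ξ·[1,1] = 0, hence ξ ≤ 0, and consequently [u, λ + ξ] = ξ·[u, 1] ≤ 0, i.e. −2δt·[u, λ + ξ] ≥ 0. -/
open Finset

/-- Sign estimate (equations (3.32)–(3.33)) in the proof of Theorem 3.4: with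
`um = u⁻, v, u` the solutions at levels `n−1, n, n+1` of the mass-conserving
second-order scheme, `lam` the pointwise multiplier, `ξ` the scalar mass
multiplier and `f` standing for `L_h^n ũ^{n+1}` with `[f,1] = 0`, if
`(3u − 4v + u⁻)/(2δt) + f = λ + ξ` pointwise, the KKT conditions hold and
`[u,1] = [v,1] = [u⁻,1]`, then `[λ,1] + ξ·[1,1] = 0`, hence `ξ ≤ 0`, and
consequently `[u, λ + ξ] = ξ·[u,1] ≤ 0`, i.e. `−2δt·[u, λ + ξ] ≥ 0`. -/
theorem second_order_scalar_multiplier_sign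
    {S : Type*} [Fintype S] [Nonempty S] (w : S → ℝ) (hw : ∀ z, 0 < w z)
    (δt : ℝ) (hδt : 0 < δt) (ξ : ℝ)
    (um v u ut lam f : S → ℝ)
    (hstep : ∀ z, (3 * u z - 4 * v z + um z) / (2 * δt) + f z = lam z + ξ)
    (hlam : ∀ z, 0 ≤ lam z) (hu : ∀ z, 0 ≤ u z)
    (hcomp : ∀ z, lam z * u z = 0)
    (hf1 : (∑ z, w z * f z * 1) = 0)
    (hmass1 : (∑ z, w z * u z * 1) = ∑ z, w z * v z * 1)
    (hmass2 : (∑ z, w z * v z * 1) = ∑ z, w z * um z * 1) :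
    (∑ z, w z * lam z * 1) + ξ * (∑ z, w z * (1 : ℝ) * 1) = 0 ∧
    ξ ≤ 0 ∧
    (∑ z, w z * u z * (lam z + ξ)) = ξ * (∑ z, w z * u z * 1) ∧
    (∑ z, w z * u z * (lam z + ξ)) ≤ 0 ∧
    0 ≤ -2 * δt * (∑ z, w z * u z * (lam z + ξ)) := by
  have h1 : (∑ z, w z * lam z * 1) + ξ * (∑ z, w z * (1 : ℝ) * 1) = 0 := by
    have e : (∑ z, w z * lam z * 1) + ξ * (∑ z, w z * (1 : ℝ) * 1)
        = (3 * (∑ z, w z * u z * 1) - 4 * (∑ z, w z * v z * 1) + ∑ z, w z * um z * 1) / (2 * δt)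
          + ∑ z, w z * f z * 1 := by
      simp only [Finset.mul_sum, Finset.sum_div, ← Finset.sum_add_distrib,
        ← Finset.sum_sub_distrib]
      refine Finset.sum_congr rfl fun z _ => ?_
      have h := hstep z
      calc w z * lam z * 1 + ξ * (w z * 1 * 1) = w z * (lam z + ξ) := by ring
        _ = _ := by rw [← h]; ring
    rw [e, hf1, hmass1, ← hmass2]
    ring
  have hW : 0 < ∑ z, w z * (1 : ℝ) * 1 :=
    Finset.sum_pos (fun z _ => by simpa using hw z) Finset.univ_nonempty
  have hL : 0 ≤ ∑ z, w z * lam z * 1 :=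
    Finset.sum_nonneg fun z _ => by simpa using mul_nonneg (hw z).le (hlam z)
  have hU : 0 ≤ ∑ z, w z * u z * 1 :=
    Finset.sum_nonneg fun z _ => by simpa using mul_nonneg (hw z).le (hu z)
  have hξ : ξ ≤ 0 := by
    by_contra hc
    have := mul_pos (not_le.mp hc) hW
    linarith
  have h3 : (∑ z, w z * u z * (lam z + ξ)) = ξ * (∑ z, w z * u z * 1) := by
    rw [Finset.mul_sum]
    refine Finset.sum_congr rfl fun z _ => ?_
    linear_combination w z * hcomp z
  have h4 : (∑ z, w z * u z * (lam z + ξ)) ≤ 0 := by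
    rw [h3]
    exact mul_nonpos_of_nonpos_of_nonneg hξ hU
  refine ⟨h1, hξ, h3, h4, ?_⟩
  exact mul_nonneg_of_nonpos_of_nonpos (by linarith) h4
end
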